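/- The sequence of convolutional iterated 3-majority functions with stride 2 is noise sensitive: with f_n : {-1,1}^{2^{n+1}−1} → {-1,1} defined on the graph G_n^{(2)} by placing the input bits at layer 0, recursively setting f(v_{k,i}) = maj(f(v_{k−1,2i−1}), f(v_{k−1,2i}), f(v_{k−1,2i+1})), and letting f_n(ω) be the value of the single top node, it holds for every 0 < ε ≤ 1/2 that lim_{n→∞} Cov(f_n(ω), f_n(ω^ε)) = 0. -/

import Mathlib

open Finset Filter

noncomputable section

/-- The ±1 real value of a Boolean bit. -/
def chi (b : Bool) : ℝ := if b then 1 else -1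

/-- The joint probability of the pair `(ω, ω^ε)`, where `ω` is uniform on `{-1,1}^m` and
`ω^ε` flips each bit of `ω` independently with probability `ε`. -/
def pairWeight (m : ℕ) (ε : ℝ) (ω η : Fin m → Bool) : ℝ :=
  (1 / 2) ^ m * ∏ i, (if ω i = η i then 1 - ε else ε)

/-- Expectation of `g ω` for `ω` uniform on `{-1,1}^m`. -/
def unifMean (m : ℕ) (g : (Fin m → Bool) → ℝ) : ℝ := (∑ ω, g ω) / 2 ^ m

/-- Expectation of `F ω ω^ε` over the correlated pair `(ω, ω^ε)`. -/
def pairMean (m : ℕ) (ε : ℝ) (F : (Fin m → Bool) → (Fin m → Bool) → ℝ) : ℝ :=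
  ∑ ω, ∑ η, pairWeight m ε ω η * F ω η

/-- `Cov_{ω,ω^ε}(g(ω), g(ω^ε))` for a fixed real-valued function `g` on the cube. -/
def noiseCov (m : ℕ) (ε : ℝ) (g : (Fin m → Bool) → ℝ) : ℝ :=
  pairMean m ε (fun ω η => g ω * g η) - unifMean m g ^ 2

/-- Majority of three Boolean values. -/
def maj (a b c : Bool) : Bool := (a && b) || (a && c) || (b && c)

/-- The value of node `v_{k,i}` in the stride-2 convolutional iterated 3-majority network
`G_n^{(2)}` with input row `ω` (indexed by `ℕ`; the relevant positions at layer `k` are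
`1,...,2^{n+1-k}-1`). -/
def bval (ω : ℕ → Bool) : ℕ → ℕ → Bool
  | 0, i => ω i
  | k + 1, i => maj (bval ω k (2 * i - 1)) (bval ω k (2 * i)) (bval ω k (2 * i + 1))

/-- Reindexing of an input vector `ω ∈ {-1,1}^{2^{n+1}-1}` (coordinates `0,...,2^{n+1}-2`) as
the row `ω(1),...,ω(2^{n+1}-1)` of input bits of `G_n^{(2)}`. -/
def extend2 (n : ℕ) (ω : Fin (2 ^ (n + 1) - 1) → Bool) : ℕ → Bool := fun i =>
  if h : 1 ≤ i ∧ i ≤ 2 ^ (n + 1) - 1 then ω ⟨i - 1, by omega⟩ else false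

/-- The iterated 3-majority function with stride 2: the value of the top node `v_{n,1}`. -/
def iterMaj2 (n : ℕ) (ω : Fin (2 ^ (n + 1) - 1) → Bool) : Bool := bval (extend2 n ω) n 1

def chiS {m : ℕ} (S : Finset (Fin m)) (ω : Fin m → Bool) : ℝ := ∏ i ∈ S, chi (ω i)

def fc {m : ℕ} (f : (Fin m → Bool) → ℝ) (S : Finset (Fin m)) : ℝ :=
  (∑ ω, f ω * chiS S ω) / 2 ^ m

lemma kernel_eq {m : ℕ} (ε : ℝ) (ω η : Fin m → Bool) :
    (∏ i, (if ω i = η i then 1 - ε else ε)) =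
      (1 / 2) ^ m * ∑ S : Finset (Fin m), (1 - 2 * ε) ^ S.card * (chiS S ω * chiS S η) := by
  have h1 : ∀ i, (if ω i = η i then 1 - ε else ε) =
      (1 / 2) * (1 + (1 - 2 * ε) * (chi (ω i) * chi (η i))) := by
    intro i
    unfold chi
    cases ω i <;> cases η i <;> simp <;> ring
  rw [Finset.prod_congr rfl (fun i _ => h1 i), Finset.prod_mul_distrib, Finset.prod_one_add]
  simp [chiS, Finset.prod_mul_distrib]

lemma pairMean_eq {m : ℕ} (ε : ℝ) (f : (Fin m → Bool) → ℝ) :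
    pairMean m ε (fun ω η => f ω * f η) =
      ∑ S : Finset (Fin m), (1 - 2 * ε) ^ S.card * fc f S ^ 2 := by
  unfold pairMean pairWeight
  have h : ∀ S : Finset (Fin m), (1 - 2 * ε) ^ S.card * fc f S ^ 2 =
      ∑ ω, ∑ η, (1 / 2) ^ m * ((1 / 2) ^ m * ((1 - 2 * ε) ^ S.card * (chiS S ω * chiS S η)))
        * (f ω * f η) := by
    intro S
    unfold fc
    rw [div_pow, sq (∑ ω, f ω * chiS S ω), Finset.sum_mul_sum, Finset.sum_div, Finset.mul_sum]
    refine Finset.sum_congr rfl fun ω _ => ?_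
    rw [Finset.sum_div, Finset.mul_sum]
    refine Finset.sum_congr rfl fun η _ => ?_
    rw [one_div, inv_pow]
    field_simp
  rw [Finset.sum_congr rfl (fun S _ => h S)]
  symm
  rw [Finset.sum_comm]
  refine Finset.sum_congr rfl fun ω _ => ?_
  rw [Finset.sum_comm]
  refine Finset.sum_congr rfl fun η _ => ?_
  rw [kernel_eq, Finset.mul_sum, Finset.mul_sum, Finset.sum_mul]

lemma parseval {m : ℕ} (f : (Fin m → Bool) → ℝ) (hf : ∀ ω, f ω ^ 2 = 1) :
    ∑ S : Finset (Fin m), fc f S ^ 2 = 1 := by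
  have h := pairMean_eq (m := m) 0 f
  simp only [mul_zero, sub_zero, one_pow, one_mul] at h
  rw [← h]
  unfold pairMean pairWeight
  have h2 : ∀ ω η : Fin m → Bool, (∏ i, (if ω i = η i then (1 : ℝ) - 0 else 0)) =
      if ω = η then 1 else 0 := by
    intro ω η
    split_ifs with h
    · subst h; simp
    · obtain ⟨i, hi⟩ := Function.ne_iff.mp h
      exact Finset.prod_eq_zero (Finset.mem_univ i) (by simp [hi])
  simp only [h2]
  simp only [mul_ite, mul_one, mul_zero, ite_mul, zero_mul, Finset.sum_ite_eq, Finset.mem_univ,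
    if_true, ← sq, hf]
  simp

lemma noiseCov_eq {m : ℕ} (ε : ℝ) (f : (Fin m → Bool) → ℝ) :
    noiseCov m ε f =
      ∑ S ∈ (Finset.univ : Finset (Finset (Fin m))).erase ∅,
        (1 - 2 * ε) ^ S.card * fc f S ^ 2 := by
  unfold noiseCov
  rw [pairMean_eq, ← Finset.add_sum_erase _ _ (Finset.mem_univ ∅)]
  simp [fc, chiS, unifMean]

/-- flip of coordinate i -/
def flipAt {m : ℕ} (i : Fin m) (ω : Fin m → Bool) : Fin m → Bool := Function.update ω i (!ω i)

lemma flipAt_flipAt {m : ℕ} (i : Fin m) (ω : Fin m → Bool) : flipAt i (flipAt i ω) = ω := by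
  simp [flipAt]

lemma sum_flip_zero {m : ℕ} (i : Fin m) (F : (Fin m → Bool) → ℝ)
    (h : ∀ ω, F (flipAt i ω) = - F ω) : ∑ ω, F ω = 0 := by
  have h1 : ∑ ω, F (flipAt i ω) = ∑ ω, F ω :=
    Equiv.sum_comp (Function.Involutive.toPerm (flipAt i) (flipAt_flipAt i)) F
  simp only [h, Finset.sum_neg_distrib] at h1
  linarith

lemma chiS_flip_mem {m : ℕ} (i : Fin m) (S : Finset (Fin m)) (hi : i ∈ S) (ω : Fin m → Bool) :
    chiS S (flipAt i ω) = - chiS S ω := by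
  unfold chiS
  rw [← Finset.mul_prod_erase _ _ hi, ← Finset.mul_prod_erase _ _ hi]
  have : ∏ x ∈ S.erase i, chi (flipAt i ω x) = ∏ x ∈ S.erase i, chi (ω x) := by
    refine Finset.prod_congr rfl fun x hx => ?_
    simp [flipAt, Finset.ne_of_mem_erase hx]
  rw [this]
  have : chi (flipAt i ω i) = - chi (ω i) := by
    unfold chi flipAt; cases ω i <;> simp
  rw [this]; ring

lemma chiS_flip_notMem {m : ℕ} (i : Fin m) (S : Finset (Fin m)) (hi : i ∉ S) (ω : Fin m → Bool) :
    chiS S (flipAt i ω) = chiS S ω := by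
  unfold chiS
  refine Finset.prod_congr rfl fun x hx => ?_
  have : x ≠ i := fun h => hi (h ▸ hx)
  simp [flipAt, this]

lemma chiS_sq {m : ℕ} (S : Finset (Fin m)) (ω : Fin m → Bool) : chiS S ω * chiS S ω = 1 := by
  unfold chiS
  rw [← Finset.prod_mul_distrib]
  refine Finset.prod_eq_one fun i _ => ?_
  unfold chi; cases ω i <;> simp

/-- Stopping-set version of the Schramm–Steif inequality for a fixed algorithm. -/
lemma schramm_steif {m : ℕ} (k : ℕ) (hk : 1 ≤ k) (f : (Fin m → Bool) → ℝ) (hf : ∀ ω, f ω ^ 2 = 1)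
    (J : (Fin m → Bool) → Finset (Fin m))
    (hJ : ∀ ω ω', (∀ i ∈ J ω, ω i = ω' i) → J ω' = J ω ∧ f ω' = f ω) :
    (∑ S ∈ (Finset.univ : Finset (Fin m)).powersetCard k, fc f S ^ 2) ^ 2 ≤
      ∑ S ∈ (Finset.univ : Finset (Fin m)).powersetCard k,
        fc f S ^ 2 * ((∑ ω, if Disjoint S (J ω) then (0 : ℝ) else 1) / 2 ^ m) := by
  set P := (Finset.univ : Finset (Fin m)).powersetCard k with hP
  have hflip : ∀ ω i, i ∉ J ω → J (flipAt i ω) = J ω ∧ f (flipAt i ω) = f ω := by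
    intro ω i hi
    refine hJ ω _ fun x hx => ?_
    have : x ≠ i := fun h => hi (h ▸ hx)
    simp [flipAt, this]
  have hdis : ∀ (S : Finset (Fin m)) (i : Fin m) (hi : i ∈ S) ω,
      (Disjoint S (J (flipAt i ω)) ↔ Disjoint S (J ω)) := by
    intro S i hi ω
    constructor
    · intro h
      have h1 := (hflip (flipAt i ω) i (Finset.disjoint_left.mp h hi)).1
      rw [flipAt_flipAt] at h1
      rwa [h1]
    · intro h
      rwa [(hflip ω i (Finset.disjoint_left.mp h hi)).1]
  set d : Finset (Fin m) → (Fin m → Bool) → ℝ := fun S ω => if Disjoint S (J ω) then 1 else 0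
    with hd
  -- the three cancellation facts
  have c1 : ∀ S ∈ P, ∑ ω, f ω * (d S ω * chiS S ω) = 0 := by
    intro S hS
    have hc : S.card = k := (Finset.mem_powersetCard.mp hS).2
    obtain ⟨i, hi⟩ := Finset.card_pos.mp (by omega : 0 < S.card)
    refine sum_flip_zero i _ fun ω => ?_
    rw [chiS_flip_mem i S hi]
    simp only [hd, hdis S i hi]
    split_ifs with h
    · rw [(hflip ω i (Finset.disjoint_left.mp h hi)).2]; ring
    · ring
  have hex : ∀ S ∈ P, ∀ S' ∈ P, S ≠ S' → ∃ i ∈ S', i ∉ S := by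
    intro S hS S' hS' hne
    by_contra hcon
    push Not at hcon
    have := Finset.eq_of_subset_of_card_le (s := S') (t := S) hcon
      (by rw [(Finset.mem_powersetCard.mp hS).2, (Finset.mem_powersetCard.mp hS').2])
    exact hne this.symm
  have c2 : ∀ S ∈ P, ∀ S' ∈ P, S ≠ S' → ∑ ω, chiS S ω * (d S' ω * chiS S' ω) = 0 := by
    intro S hS S' hS' hne
    obtain ⟨i, hi, hi'⟩ := hex S hS S' hS' hne
    refine sum_flip_zero i _ fun ω => ?_
    rw [chiS_flip_mem i S' hi, chiS_flip_notMem i S hi']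
    simp only [hd, hdis S' i hi]
    split_ifs with h <;> ring
  have c3 : ∀ S ∈ P, ∀ S' ∈ P, S ≠ S' →
      ∑ ω, (d S ω * chiS S ω) * (d S' ω * chiS S' ω) = 0 := by
    intro S hS S' hS' hne
    obtain ⟨i, hi, hi'⟩ := hex S hS S' hS' hne
    refine sum_flip_zero i _ fun ω => ?_
    rw [chiS_flip_mem i S' hi, chiS_flip_notMem i S hi']
    simp only [hd, hdis S' i hi]
    by_cases h : Disjoint S' (J ω)
    · simp only [h, (hflip ω i (Finset.disjoint_left.mp h hi)).1]; ring
    · simp [h]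
  have c4 : ∀ S ∈ P, ∀ S' ∈ P, S ≠ S' → ∑ ω, chiS S ω * chiS S' ω = 0 := by
    intro S hS S' hS' hne
    obtain ⟨i, hi, hi'⟩ := hex S hS S' hS' hne
    refine sum_flip_zero i _ fun ω => ?_
    rw [chiS_flip_mem i S' hi, chiS_flip_notMem i S hi']
    ring
  set h : (Fin m → Bool) → ℝ := fun ω => ∑ S ∈ P, fc f S * (chiS S ω - d S ω * chiS S ω) with hh
  have e1 : ∑ ω, f ω * h ω = 2 ^ m * ∑ S ∈ P, fc f S ^ 2 := by
    simp only [hh, Finset.mul_sum]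
    rw [Finset.sum_comm]
    refine Finset.sum_congr rfl fun S hS => ?_
    have : ∑ ω, f ω * (fc f S * (chiS S ω - d S ω * chiS S ω)) =
        fc f S * (∑ ω, f ω * chiS S ω - ∑ ω, f ω * (d S ω * chiS S ω)) := by
      rw [← Finset.sum_sub_distrib, Finset.mul_sum]
      exact Finset.sum_congr rfl fun ω _ => by ring
    rw [this, c1 S hS]
    unfold fc
    field_simp
    ring
  have e2 : ∑ ω, h ω ^ 2 = ∑ S ∈ P, fc f S ^ 2 * ∑ ω, (1 - d S ω) := by
    simp only [hh, sq (∑ S ∈ P, _), Finset.sum_mul_sum]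
    rw [Finset.sum_comm]
    refine Finset.sum_congr rfl fun S hS => ?_
    rw [Finset.sum_comm, Finset.sum_eq_single_of_mem S hS]
    · rw [Finset.mul_sum]
      refine Finset.sum_congr rfl fun ω _ => ?_
      have h1 := chiS_sq S ω
      have h2 : d S ω * d S ω = d S ω := by simp only [hd]; split_ifs <;> simp
      linear_combination (fc f S ^ 2 * (1 - d S ω)^2) * h1 + fc f S ^ 2 * h2
    · intro S' hS' hne
      have : ∑ ω, fc f S * (chiS S ω - d S ω * chiS S ω) * (fc f S' * (chiS S' ω - d S' ω * chiS S' ω))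
          = fc f S * fc f S' * (∑ ω, chiS S ω * chiS S' ω - ∑ ω, chiS S ω * (d S' ω * chiS S' ω)
            - ∑ ω, chiS S' ω * (d S ω * chiS S ω)
            + ∑ ω, (d S ω * chiS S ω) * (d S' ω * chiS S' ω)) := by
        rw [← Finset.sum_sub_distrib, ← Finset.sum_sub_distrib, ← Finset.sum_add_distrib,
          Finset.mul_sum]
        exact Finset.sum_congr rfl fun ω _ => by ring
      rw [this, c2 S hS S' hS' hne.symm, c2 S' hS' S hS hne, c3 S hS S' hS' hne.symm,
        c4 S hS S' hS' hne.symm]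
      ring
  have e3 : (∑ ω, f ω * h ω) ^ 2 ≤ (∑ ω, f ω ^ 2) * ∑ ω, h ω ^ 2 :=
    Finset.sum_mul_sq_le_sq_mul_sq _ _ _
  have e4 : ∑ ω : Fin m → Bool, f ω ^ 2 = 2 ^ m := by simp [hf]
  rw [e1, e2, e4] at e3
  have hpos : (0 : ℝ) < 2 ^ m := by positivity
  have e5 : ∑ S ∈ P, fc f S ^ 2 * ((∑ ω, if Disjoint S (J ω) then (0 : ℝ) else 1) / 2 ^ m) =
      (∑ S ∈ P, fc f S ^ 2 * ∑ ω, (1 - d S ω)) / 2 ^ m := by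
    rw [Finset.sum_div]
    refine Finset.sum_congr rfl fun S _ => ?_
    rw [mul_div_assoc]
    congr 3
    ext ω
    simp only [hd]; split_ifs <;> simp
  rw [e5, le_div_iff₀ hpos]
  nlinarith

/-- Which children of node `i` are looked at, given the strategy `t` and the values. -/
def asks (t : Fin 3) (va vb vc : Bool) (i j : ℕ) : Prop :=
  (t = 0 ∧ (j = 2 * i - 1 ∨ j = 2 * i + 1 ∨ (j = 2 * i ∧ va ≠ vc))) ∨
  (t = 1 ∧ (j = 2 * i ∨ j = 2 * i + 1 ∨ (j = 2 * i - 1 ∧ vb ≠ vc))) ∨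
  (t = 2 ∧ (j = 2 * i ∨ j = 2 * i - 1 ∨ (j = 2 * i + 1 ∧ va ≠ vb)))

/-- The set of evaluated nodes. -/
inductive Qn (ω : ℕ → Bool) (c : ℕ → Fin 3) (n : ℕ) : ℕ → ℕ → Prop
  | top : Qn ω c n n 1
  | step (l i j : ℕ) : Qn ω c n (l + 1) i →
      asks (c l) (bval ω l (2 * i - 1)) (bval ω l (2 * i)) (bval ω l (2 * i + 1)) i j → Qn ω c n l j

lemma Qn_range {ω c n l j} (h : Qn ω c n l j) : l ≤ n ∧ 1 ≤ j ∧ (j + 1) * 2 ^ l ≤ 2 ^ (n + 1) := by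
  induction h with
  | top => refine ⟨le_rfl, le_rfl, ?_⟩; rw [pow_succ]; omega
  | step l i j _ ha ih =>
    obtain ⟨h1, h2, h3⟩ := ih
    have hj : 1 ≤ j ∧ j ≤ 2 * i + 1 := by
      unfold asks at ha
      omega
    refine ⟨by omega, hj.1, ?_⟩
    calc (j + 1) * 2 ^ l ≤ (2 * i + 2) * 2 ^ l := Nat.mul_le_mul_right _ (by omega)
      _ = (i + 1) * 2 ^ (l + 1) := by ring
      _ ≤ _ := h3

lemma Qn_val {ω ω' : ℕ → Bool} {c n} (h0 : ∀ j, Qn ω c n 0 j → ω' j = ω j) :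
    ∀ l j, Qn ω c n l j → bval ω' l j = bval ω l j := by
  intro l
  induction l with
  | zero => intro j hj; exact h0 j hj
  | succ l ih =>
    intro i hi
    have key : ∀ j, asks (c l) (bval ω l (2 * i - 1)) (bval ω l (2 * i)) (bval ω l (2 * i + 1)) i j →
        bval ω' l j = bval ω l j := fun j hj => ih j (Qn.step l i j hi hj)
    simp only [bval]
    have hc : c l = 0 ∨ c l = 1 ∨ c l = 2 := by
      generalize c l = t
      revert t; decide
    have k1 := key (2 * i - 1)
    have k2 := key (2 * i)
    have k3 := key (2 * i + 1)
    clear key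
    rcases hc with hc | hc | hc <;> simp only [asks, hc] at k1 k2 k3 <;>
      revert k1 k2 k3 <;>
      generalize bval ω l (2 * i - 1) = a <;> generalize bval ω l (2 * i) = b <;>
      generalize bval ω l (2 * i + 1) = d <;>
      generalize bval ω' l (2 * i - 1) = a' <;> generalize bval ω' l (2 * i) = b' <;>
      generalize bval ω' l (2 * i + 1) = d' <;>
      cases a <;> cases b <;> cases d <;> cases a' <;> cases b' <;> cases d' <;>
      simp [maj]

lemma asks_first {t : Fin 3} {va vb vc va' vb' vc' : Bool} {i j : ℕ}
    (h : asks t va vb vc i j)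
    (ha : (asks t va' vb' vc' i (2 * i - 1)) → va = va')
    (hb : (asks t va' vb' vc' i (2 * i)) → vb = vb')
    (hc : (asks t va' vb' vc' i (2 * i + 1)) → vc = vc') :
    asks t va' vb' vc' i j := by
  unfold asks at *
  rcases h with ⟨rfl, h⟩ | ⟨rfl, h⟩ | ⟨rfl, h⟩
  · have h1 := ha (by simp)
    have h3 := hc (by simp)
    subst h1 h3; left; exact ⟨rfl, h⟩
  · have h1 := hb (by simp)
    have h3 := hc (by simp)
    subst h1 h3; right; left; exact ⟨rfl, h⟩
  · have h1 := ha (by simp)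
    have h3 := hb (by simp)
    subst h1 h3; right; right; exact ⟨rfl, h⟩

lemma Qn_mono {ω ω' : ℕ → Bool} {c n} (h0 : ∀ j, Qn ω c n 0 j → ω' j = ω j) {l j}
    (h : Qn ω' c n l j) : Qn ω c n l j := by
  induction h with
  | top => exact Qn.top
  | step l i j _ ha ih =>
    refine Qn.step l i j ih (asks_first ha ?_ ?_ ?_) <;>
    exact fun h => Qn_val h0 _ _ (Qn.step l i _ ih h)

lemma Qn_mono' {ω ω' : ℕ → Bool} {c n} (h0 : ∀ j, Qn ω c n 0 j → ω' j = ω j) {l j}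
    (h : Qn ω c n l j) : Qn ω' c n l j := by
  induction h with
  | top => exact Qn.top
  | step l i j hi ha ih =>
    refine Qn.step l i j ih ?_
    have k := fun j h => Qn_val h0 l j (Qn.step l i j hi h)
    have k1 := k (2 * i - 1)
    have k2 := k (2 * i)
    have k3 := k (2 * i + 1)
    unfold asks at *
    rcases ha with ⟨hc, ha⟩ | ⟨hc, ha⟩ | ⟨hc, ha⟩ <;> simp only [hc] at k1 k2 k3
    · rw [k1 (by simp), k3 (by simp)]; left; exact ⟨hc, ha⟩
    · rw [k2 (by simp), k3 (by simp)]; right; left; exact ⟨hc, ha⟩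
    · rw [k1 (by simp), k2 (by simp)]; right; right; exact ⟨hc, ha⟩

lemma bval_local (ω ω' : ℕ → Bool) : ∀ k j, 1 ≤ j →
    (∀ q, (j - 1) * 2 ^ k < q → q < (j + 1) * 2 ^ k → ω q = ω' q) →
    bval ω k j = bval ω' k j := by
  intro k
  induction k with
  | zero => intro j hj h; exact h j (by simp; omega) (by simp)
  | succ k ih =>
    intro j hj h
    have key : ∀ i, 2 * j - 1 ≤ i → i ≤ 2 * j + 1 → bval ω k i = bval ω' k i := by
      intro i h1 h2
      refine ih i (by omega) fun q hq1 hq2 => h q ?_ ?_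
      · refine lt_of_le_of_lt ?_ hq1
        rw [pow_succ', ← mul_assoc]
        exact Nat.mul_le_mul_right _ (by omega)
      · refine lt_of_lt_of_le hq2 ?_
        rw [pow_succ', ← mul_assoc]
        exact Nat.mul_le_mul_right _ (by omega)
    simp only [bval]
    rw [key _ le_rfl (by omega), key (2 * j) (by omega) (by omega), key (2 * j + 1) (by omega) le_rfl]

lemma bval_not (ω : ℕ → Bool) : ∀ k j, bval (fun q => ! ω q) k j = ! bval ω k j := by
  intro k
  induction k with
  | zero => intro j; rfl
  | succ k ih =>
    intro j
    simp only [bval, ih]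
    generalize bval ω k (2 * j - 1) = a
    generalize bval ω k (2 * j) = b
    generalize bval ω k (2 * j + 1) = d
    cases a <;> cases b <;> cases d <;> rfl

/-- all valid nodes in layer `l` in the window around position `p`, except those satisfying `H`,
are true -/
def Win (ω : ℕ → Bool) (n p D l : ℕ) (H : ℕ → Prop) : Prop :=
  ∀ j, 1 ≤ j → (j + 1) * 2 ^ l ≤ 2 ^ (n + 1) → p / 2 ^ l ≤ j + D → j ≤ p / 2 ^ l + 1 + D →
    ¬ H j → bval ω l j = true

lemma Win_children {ω n p D l H} (h : Win ω n p (2 * D + 2) l H) (j : ℕ) (hj : 1 ≤ j)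
    (hv : (j + 1) * 2 ^ (l + 1) ≤ 2 ^ (n + 1)) (h1 : p / 2 ^ (l + 1) ≤ j + D)
    (h2 : j ≤ p / 2 ^ (l + 1) + 1 + D) (i : ℕ) (hi1 : 2 * j - 1 ≤ i) (hi2 : i ≤ 2 * j + 1)
    (hH : ¬ H i) : bval ω l i = true := by
  have hd : p / 2 ^ (l + 1) = p / 2 ^ l / 2 := by rw [pow_succ, Nat.div_div_eq_div_mul]
  rw [hd] at h1 h2
  refine h i (by omega) ?_ (by omega) (by omega) hH
  refine le_trans ?_ hv
  rw [pow_succ', ← mul_assoc]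
  exact Nat.mul_le_mul_right _ (by omega)

lemma maj_ab {a b c : Bool} (ha : a = true) (hb : b = true) : maj a b c = true := by
  subst ha hb; cases c <;> rfl
lemma maj_ac {a b c : Bool} (ha : a = true) (hb : c = true) : maj a b c = true := by
  subst ha hb; cases b <;> rfl
lemma maj_bc {a b c : Bool} (ha : b = true) (hb : c = true) : maj a b c = true := by
  subst ha hb; cases a <;> rfl

/-- propagation by majority -/
lemma Win_step {ω n p D l H H'} (h : Win ω n p (2 * D + 2) l H)
    (hH : ∀ j, 1 ≤ j → ¬ H' j → (¬ H (2 * j - 1) ∧ ¬ H (2 * j)) ∨ (¬ H (2 * j - 1) ∧ ¬ H (2 * j + 1)) ∨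
      (¬ H (2 * j) ∧ ¬ H (2 * j + 1))) : Win ω n p D (l + 1) H' := by
  intro j hj hv h1 h2 hn
  have key := Win_children h j hj hv h1 h2
  simp only [bval]
  rcases hH j hj hn with ⟨x, y⟩ | ⟨x, y⟩ | ⟨x, y⟩
  · exact maj_ab (key _ le_rfl (by omega) x) (key _ (by omega) (by omega) y)
  · exact maj_ac (key _ le_rfl (by omega) x) (key _ (by omega) (by omega) y)
  · exact maj_bc (key _ (by omega) (by omega) x) (key _ (by omega) (by omega) y)

lemma Win_weaken {ω n p D D' l H} (hD : D' ≤ D) (h : Win ω n p D l H) : Win ω n p D' l H :=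
  fun j hj hv h1 h2 => h j hj hv (by omega) (by omega)

/-- from the odd nodes in the annulus to three full layers -/
lemma Win_block {ω n p k}
    (h : Win ω n p 254 k (fun j => j % 2 = 0 ∨ (p / 2 ^ k ≤ j + 1 ∧ j ≤ p / 2 ^ k + 2))) :
    Win ω n p 2 (k + 4) (fun _ => False) ∧ Win ω n p 2 (k + 5) (fun _ => False) ∧
      Win ω n p 2 (k + 6) (fun _ => False) := by
  set a := p / 2 ^ k
  obtain ⟨v, h1⟩ : ∃ v, Win ω n p 126 (k + 1) (fun j => v ≤ j + 1 ∧ j ≤ v + 1) :=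
    ⟨(a + 1) / 2, Win_step h (by intro j hj hn; omega)⟩
  obtain ⟨w, h2⟩ : ∃ w, Win ω n p 62 (k + 2) (fun j => w ≤ j ∧ j ≤ w + 1) :=
    ⟨v / 2, Win_step h1 (by intro j hj hn; omega)⟩
  obtain ⟨x, h3⟩ : ∃ x, Win ω n p 30 (k + 3) (fun j => j = x) :=
    ⟨(w + 1) / 2, Win_step h2 (by intro j hj hn; omega)⟩
  have h4 : Win ω n p 14 (k + 4) (fun _ => False) := Win_step h3 (by intro j hj hn; omega)
  have h5 : Win ω n p 6 (k + 5) (fun _ => False) := Win_step h4 (fun j _ _ => Or.inl ⟨id, id⟩)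
  have h6 : Win ω n p 2 (k + 6) (fun _ => False) := Win_step h5 (fun j _ _ => Or.inl ⟨id, id⟩)
  exact ⟨Win_weaken (by omega) h4, Win_weaken (by omega) h5, h6⟩

lemma asks_near {t va vb vc i j} (h : asks t va vb vc i j) : 2 * i ≤ j + 1 ∧ j ≤ 2 * i + 1 := by
  unfold asks at h; omega

lemma Qn_up {ω c n l j} (h : Qn ω c n l j) (hl : l < n) : ∃ i, Qn ω c n (l + 1) i ∧
    asks (c l) (bval ω l (2 * i - 1)) (bval ω l (2 * i)) (bval ω l (2 * i + 1)) i j := by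
  cases h with
  | top => omega
  | step l i j hi ha => exact ⟨i, hi, ha⟩

lemma div_succ (p l : ℕ) : p / 2 ^ (l + 1) = p / 2 ^ l / 2 := by
  rw [pow_succ, Nat.div_div_eq_div_mul]

def alive (ω : ℕ → Bool) (c : ℕ → Fin 3) (n p l : ℕ) : Prop :=
  Qn ω c n l (p / 2 ^ l) ∨ Qn ω c n l (p / 2 ^ l + 1)

lemma alive_up {ω c n p l} (h : alive ω c n p l) (hl : l < n) : alive ω c n p (l + 1) := by
  unfold alive
  rw [div_succ]
  rcases h with h | h <;> obtain ⟨i, hi, ha⟩ := Qn_up h hl <;> have := asks_near ha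
  · rcases (by omega : i = p / 2 ^ l / 2 ∨ i = p / 2 ^ l / 2 + 1) with rfl | rfl
    · exact Or.inl hi
    · exact Or.inr hi
  · rcases (by omega : i = p / 2 ^ l / 2 ∨ i = p / 2 ^ l / 2 + 1) with rfl | rfl
    · exact Or.inl hi
    · exact Or.inr hi

lemma alive_all {ω c n p} (h : Qn ω c n 0 p) : ∀ l, l ≤ n → alive ω c n p l := by
  intro l
  induction l with
  | zero => intro _; left; simpa using h
  | succ l ih => intro hl; exact alive_up (ih (by omega)) (by omega)

lemma step_true {ω c n p l j} (hW : Win ω n p 2 l (fun _ => False)) (hl : l < n)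
    (h : Qn ω c n l j) (hj : j = p / 2 ^ l ∨ j = p / 2 ^ l + 1) :
    ∃ i, Qn ω c n (l + 1) i ∧ (i = p / 2 ^ (l + 1) ∨ i = p / 2 ^ (l + 1) + 1) ∧ 1 ≤ i ∧
      (c l = 0 → j + 1 = 2 * i ∨ j = 2 * i + 1) ∧ (c l = 1 → j = 2 * i ∨ j = 2 * i + 1) ∧
      (c l = 2 → j + 1 = 2 * i ∨ j = 2 * i) := by
  obtain ⟨i, hi, ha⟩ := Qn_up h hl
  have hn := asks_near ha
  obtain ⟨-, r1, r2⟩ := Qn_range hi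
  have hi' : i = p / 2 ^ (l + 1) ∨ i = p / 2 ^ (l + 1) + 1 := by rw [div_succ]; omega
  have key : ∀ x, 2 * i - 1 ≤ x → x ≤ 2 * i + 1 → bval ω l x = true := by
    intro x h1 h2
    refine hW x (by omega) ?_ (by omega) (by omega) (fun h => h)
    refine le_trans ?_ r2
    rw [pow_succ', ← mul_assoc]
    exact Nat.mul_le_mul_right _ (by omega)
  rw [key _ le_rfl (by omega), key (2 * i) (by omega) (by omega), key (2 * i + 1) (by omega) le_rfl] at ha
  refine ⟨i, hi, hi', r1, ?_, ?_, ?_⟩ <;> intro hc <;> rw [hc] at ha <;> simp [asks] at ha <;> omega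

/-- choices that kill -/
def killA (a : ℕ) : Fin 3 :=
  if a / 4 % 2 = 0 then (if a / 2 % 2 = 0 then 1 else if a % 2 = 0 then 1 else 0)
  else (if a / 2 % 2 = 1 then 2 else if a % 2 = 1 then 2 else 0)
def killB (a : ℕ) : Fin 3 := if a % 2 = 0 then 1 else 2

lemma kill {ω c n p l} (hl : l + 2 < n)
    (h0 : Win ω n p 2 l (fun _ => False)) (h1 : Win ω n p 2 (l + 1) (fun _ => False))
    (h2 : Win ω n p 2 (l + 2) (fun _ => False)) (c2 : c (l + 2) = 0)
    (c1 : c (l + 1) = killA (p / 2 ^ l)) (c0 : c l = killB (p / 2 ^ l)) :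
    ¬ alive ω c n p l := by
  intro hal
  obtain ⟨j, hj, hj'⟩ : ∃ j, Qn ω c n l j ∧ (j = p / 2 ^ l ∨ j = p / 2 ^ l + 1) := by
    rcases hal with h | h
    · exact ⟨_, h, Or.inl rfl⟩
    · exact ⟨_, h, Or.inr rfl⟩
  obtain ⟨i1, q1, e1, p1, s10, s11, s12⟩ := step_true h0 (by omega) hj hj'
  obtain ⟨i2, q2, e2, p2, s20, s21, s22⟩ := step_true h1 (by omega) q1 e1
  obtain ⟨i3, q3, e3, p3, s30, s31, s32⟩ := step_true h2 (by omega) q2 e2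
  have d3 := div_succ p (l + 2)
  have d2 := div_succ p (l + 1)
  have d1 := div_succ p l
  rw [d3, d2, d1] at e3
  rw [d2, d1] at e2
  rw [d1] at e1
  clear q1 q2 q3 hj hal h0 h1 h2
  generalize p / 2 ^ l = a at *
  have s3 := s30 c2
  rw [c1] at s20 s21 s22
  rw [c0] at s10 s11 s12
  unfold killA at s20 s21 s22
  unfold killB at s10 s11 s12
  clear s30 s31 s32 c0 c1 c2
  split_ifs at * <;> simp at s10 s11 s12 s20 s21 s22 <;> omega

section Indep
variable {ι κ : Type*} [Fintype ι] [Fintype κ] [DecidableEq ι] [DecidableEq κ]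
set_option linter.unusedSectionVars false

open Classical in
def pr (P : (ι → Bool) × (κ → Fin 3) → Prop) : ℝ :=
  (∑ x, if P x then (1 : ℝ) else 0) / Fintype.card ((ι → Bool) × (κ → Fin 3))

lemma cardX_pos : (0 : ℝ) < Fintype.card ((ι → Bool) × (κ → Fin 3)) := by
  exact_mod_cast Fintype.card_pos

lemma pr_nonneg (P : (ι → Bool) × (κ → Fin 3) → Prop) : 0 ≤ pr P := by
  unfold pr
  exact div_nonneg (Finset.sum_nonneg fun x _ => by split_ifs <;> norm_num) cardX_pos.le

lemma pr_mono {P R : (ι → Bool) × (κ → Fin 3) → Prop} (h : ∀ x, P x → R x) : pr P ≤ pr R := by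
  unfold pr
  refine div_le_div_of_nonneg_right (Finset.sum_le_sum fun x _ => ?_) cardX_pos.le
  have := h x
  by_cases hp : P x
  · simp [hp, this hp]
  · simp only [hp, if_false]; split_ifs <;> norm_num

lemma pr_true : pr (fun _ : (ι → Bool) × (κ → Fin 3) => True) = 1 := by
  unfold pr
  simp only [if_true, Finset.sum_const, Finset.card_univ, nsmul_eq_mul, mul_one]
  exact div_self cardX_pos.ne'

lemma pr_not (P : (ι → Bool) × (κ → Fin 3) → Prop) : pr (fun x => ¬ P x) = 1 - pr P := by
  rw [← pr_true (ι := ι) (κ := κ)]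
  unfold pr
  rw [← sub_div, ← Finset.sum_sub_distrib]
  congr 1
  refine Finset.sum_congr rfl fun x _ => ?_
  by_cases hp : P x <;> simp [hp]

lemma pr_equiv (e : (ι → Bool) × (κ → Fin 3) ≃ (ι → Bool) × (κ → Fin 3))
    (P : (ι → Bool) × (κ → Fin 3) → Prop) : pr (fun x => P (e x)) = pr P := by
  classical
  unfold pr
  congr 1
  exact Equiv.sum_comp e (fun x => if P x then (1 : ℝ) else 0)

def Dep (A : Set (ι ⊕ κ)) (P : (ι → Bool) × (κ → Fin 3) → Prop) : Prop :=
  ∀ x y, (∀ i, Sum.inl i ∈ A → x.1 i = y.1 i) → (∀ l, Sum.inr l ∈ A → x.2 l = y.2 l) → (P x ↔ P y)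

open Classical in
def mix (A : Set (ι ⊕ κ)) (x y : (ι → Bool) × (κ → Fin 3)) : (ι → Bool) × (κ → Fin 3) :=
  (fun i => if Sum.inl i ∈ A then x.1 i else y.1 i, fun l => if Sum.inr l ∈ A then x.2 l else y.2 l)

lemma mix_mix (A : Set (ι ⊕ κ)) (x y : (ι → Bool) × (κ → Fin 3)) :
    mix A (mix A x y) (mix A y x) = x := by
  unfold mix
  ext i
  · dsimp; split_ifs <;> rfl
  · dsimp; split_ifs <;> rfl

def mixE (A : Set (ι ⊕ κ)) : ((ι → Bool) × (κ → Fin 3)) × ((ι → Bool) × (κ → Fin 3)) ≃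
    ((ι → Bool) × (κ → Fin 3)) × ((ι → Bool) × (κ → Fin 3)) where
  toFun z := (mix A z.1 z.2, mix A z.2 z.1)
  invFun z := (mix A z.1 z.2, mix A z.2 z.1)
  left_inv z := by simp [mix_mix]
  right_inv z := by simp [mix_mix]

lemma pr_and {A B : Set (ι ⊕ κ)} (hAB : Disjoint A B) {P R : (ι → Bool) × (κ → Fin 3) → Prop}
    (hP : Dep A P) (hR : Dep B R) : pr (fun x => P x ∧ R x) = pr P * pr R := by
  classical
  have key : (∑ x, if P x ∧ R x then (1 : ℝ) else 0) * Fintype.card ((ι → Bool) × (κ → Fin 3)) =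
      (∑ x, if P x then (1 : ℝ) else 0) * (∑ x, if R x then (1 : ℝ) else 0) := by
    have h1 : (∑ x, if P x ∧ R x then (1 : ℝ) else 0) * Fintype.card ((ι → Bool) × (κ → Fin 3)) =
        ∑ z : ((ι → Bool) × (κ → Fin 3)) × ((ι → Bool) × (κ → Fin 3)),
          if P z.1 ∧ R z.1 then (1 : ℝ) else 0 := by
      conv_rhs => rw [Fintype.sum_prod_type]
      rw [Finset.sum_mul]
      refine Finset.sum_congr rfl fun x _ => ?_
      by_cases h : P x ∧ R x
      · simp only [if_pos h]; simp
      · simp only [if_neg h]; simp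
    rw [h1, ← Equiv.sum_comp (mixE A), Finset.sum_mul_sum]
    rw [Fintype.sum_prod_type (f := fun z : ((ι → Bool) × (κ → Fin 3)) × ((ι → Bool) × (κ → Fin 3)) =>
      if P (mixE A z).1 ∧ R (mixE A z).1 then (1 : ℝ) else 0)]
    refine Finset.sum_congr rfl fun x _ => Finset.sum_congr rfl fun y _ => ?_
    have e1 : P (mix A x y) ↔ P x := by
      apply hP
      · intro i hi; simp [mix, hi]
      · intro i hi; simp [mix, hi]
    have e2 : R (mix A x y) ↔ R y := by
      apply hR
      · intro i hi
        have : Sum.inl i ∉ A := fun h => Set.disjoint_left.1 hAB h hi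
        simp [mix, this]
      · intro i hi
        have : Sum.inr i ∉ A := fun h => Set.disjoint_left.1 hAB h hi
        simp [mix, this]
    simp only [mixE, Equiv.coe_fn_mk, e1, e2]
    by_cases h1 : P x <;> by_cases h2 : R y <;> simp [h1, h2]
  unfold pr
  have := cardX_pos (ι := ι) (κ := κ)
  field_simp
  convert key using 4

lemma Dep.mono {A B : Set (ι ⊕ κ)} (h : A ⊆ B) {P : (ι → Bool) × (κ → Fin 3) → Prop}
    (hP : Dep A P) : Dep B P :=
  fun x y h1 h2 => hP x y (fun i hi => h1 i (h hi)) (fun i hi => h2 i (h hi))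

lemma Dep.not {A : Set (ι ⊕ κ)} {P : (ι → Bool) × (κ → Fin 3) → Prop}
    (hP : Dep A P) : Dep A (fun x => ¬ P x) :=
  fun x y h1 h2 => not_congr (hP x y h1 h2)

lemma Dep.and {A : Set (ι ⊕ κ)} {P R : (ι → Bool) × (κ → Fin 3) → Prop}
    (hP : Dep A P) (hR : Dep A R) : Dep A (fun x => P x ∧ R x) :=
  fun x y h1 h2 => and_congr (hP x y h1 h2) (hR x y h1 h2)

lemma Dep.all {σ : Type*} {A : Set (ι ⊕ κ)} {S : Finset σ} {P : σ → (ι → Bool) × (κ → Fin 3) → Prop}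
    (hP : ∀ s ∈ S, Dep A (P s)) : Dep A (fun x => ∀ s ∈ S, P s x) :=
  fun x y h1 h2 => forall₂_congr fun s hs => hP s hs x y h1 h2

lemma pr_all {σ : Type*} [DecidableEq σ] (S : Finset σ) (A : σ → Set (ι ⊕ κ))
    (P : σ → (ι → Bool) × (κ → Fin 3) → Prop)
    (hP : ∀ s ∈ S, Dep (A s) (P s)) (hA : ∀ s ∈ S, ∀ t ∈ S, s ≠ t → Disjoint (A s) (A t)) :
    pr (fun x => ∀ s ∈ S, P s x) = ∏ s ∈ S, pr (P s) := by
  induction S using Finset.induction_on with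
  | empty => simpa using pr_true (ι := ι) (κ := κ)
  | insert s S hs ih =>
    rw [Finset.prod_insert hs, ← ih (fun t ht => hP t (mem_insert_of_mem ht))
      (fun t ht u hu => hA t (mem_insert_of_mem ht) u (mem_insert_of_mem hu))]
    rw [← pr_and (A := A s) (B := ⋃ t ∈ S, A t)]
    · simp only [Finset.forall_mem_insert]
    · rw [Set.disjoint_iUnion₂_right]
      intro t ht
      exact hA s (mem_insert_self _ _) t (mem_insert_of_mem ht) (by rintro rfl; exact hs ht)
    · exact hP s (mem_insert_self _ _)
    · refine Dep.all fun t ht => (hP t (mem_insert_of_mem ht)).mono ?_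
      exact Set.subset_biUnion_of_mem (u := fun t => A t) (show t ∈ (S : Set σ) from ht)

lemma pr_choice (l : κ) (v : Fin 3) :
    pr (fun x : (ι → Bool) × (κ → Fin 3) => x.2 l = v) = 1 / 3 := by
  classical
  have hsum : ∑ v : Fin 3, pr (fun x : (ι → Bool) × (κ → Fin 3) => x.2 l = v) = 1 := by
    rw [← pr_true (ι := ι) (κ := κ)]
    unfold pr
    rw [← Finset.sum_div, Finset.sum_comm]
    congr 1
    refine Finset.sum_congr rfl fun x _ => ?_
    refine (Fintype.sum_eq_single (x.2 l) (fun w hw => if_neg (fun h => hw (Eq.symm h)))).trans ?_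
    simp
  have heq : ∀ w : Fin 3, pr (fun x : (ι → Bool) × (κ → Fin 3) => x.2 l = w) =
      pr (fun x : (ι → Bool) × (κ → Fin 3) => x.2 l = v) := by
    intro w
    rw [← pr_equiv (Equiv.prodCongr (Equiv.refl _) (Equiv.addRight (fun _ => v - w)))
      (fun x : (ι → Bool) × (κ → Fin 3) => x.2 l = v)]
    congr 1
    ext x
    simp [← eq_sub_iff_add_eq]
  simp only [heq, Finset.sum_const, Finset.card_univ, Fintype.card_fin, nsmul_eq_mul] at hsum
  push_cast at hsum
  linarith

end Indep

abbrev XX (n : ℕ) := (Fin (2 ^ (n + 1) - 1) → Bool) × (Fin n → Fin 3)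

def cc (n : ℕ) (c : Fin n → Fin 3) (l : ℕ) : Fin 3 := if h : l < n then c ⟨l, h⟩ else 0

def TT (n p k : ℕ) : Finset ℕ :=
  (Finset.Icc (p / 2 ^ k - 254) (p / 2 ^ k + 255)).filter (fun j => 1 ≤ j ∧ (j + 1) * 2 ^ k ≤ 2 ^ (n + 1) ∧
    j % 2 = 1 ∧ p / 2 ^ k ≤ j + 254 ∧ ¬ (p / 2 ^ k ≤ j + 1 ∧ j ≤ p / 2 ^ k + 2))

lemma TT_card (n p k : ℕ) : (TT n p k).card ≤ 510 := by
  refine (Finset.card_filter_le _ _).trans ?_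
  rw [Nat.card_Icc]; omega

def EV (n p k : ℕ) (x : XX n) : Prop := ∀ j ∈ TT n p k, bval (extend2 n x.1) k j = true
def EC (n l : ℕ) (v : Fin 3) (x : XX n) : Prop := cc n x.2 l = v
def EB (n p k : ℕ) (x : XX n) : Prop :=
  EV n p k x ∧ EC n (k + 4) (killB (p / 2 ^ (k + 4))) x ∧ EC n (k + 5) (killA (p / 2 ^ (k + 4))) x ∧
    EC n (k + 6) 0 x

lemma EB_kill {n p k : ℕ} {x : XX n} (hk : k + 7 ≤ n) (h : EB n p k x) :
    ¬ Qn (extend2 n x.1) (cc n x.2) n 0 p := by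
  intro hq
  obtain ⟨hv, h4, h5, h6⟩ := h
  have hW : Win (extend2 n x.1) n p 254 k (fun j => j % 2 = 0 ∨ (p / 2 ^ k ≤ j + 1 ∧ j ≤ p / 2 ^ k + 2)) := by
    intro j hj hval h1 h2 hn
    refine hv j ?_
    unfold TT
    rw [Finset.mem_filter, Finset.mem_Icc]
    refine ⟨⟨by omega, by omega⟩, hj, hval, by omega, h1, fun hh => hn (Or.inr hh)⟩
  obtain ⟨w4, w5, w6⟩ := Win_block hW
  exact kill (l := k + 4) (by omega) w4 w5 w6 h6 h5 h4 (alive_all hq (k + 4) (by omega))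

lemma EC_dep (n l : ℕ) (v : Fin 3) : Dep (ι := Fin (2 ^ (n + 1) - 1)) (κ := Fin n)
    {s | ∃ i : Fin n, s = Sum.inr i ∧ i.1 = l} (EC n l v) := by
  intro x y _ h2
  unfold EC cc
  split_ifs with h
  · rw [h2 ⟨l, h⟩ ⟨_, rfl, rfl⟩]
  · rfl

lemma EC_pr (n l : ℕ) (hl : l < n) (v : Fin 3) : pr (EC n l v) = 1 / 3 := by
  rw [← pr_choice (ι := Fin (2 ^ (n + 1) - 1)) (⟨l, hl⟩ : Fin n) v]
  congr 1
  ext x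
  simp [EC, cc, hl]

/-- support of a node -/
def NS (n k j : ℕ) : Set (Fin (2 ^ (n + 1) - 1) ⊕ Fin n) :=
  {s | ∃ i : Fin (2 ^ (n + 1) - 1), s = Sum.inl i ∧ (j - 1) * 2 ^ k < i.1 + 1 ∧ i.1 + 1 < (j + 1) * 2 ^ k}

lemma node_dep (n k j : ℕ) (hj : 1 ≤ j) :
    Dep (NS n k j) (fun x : XX n => bval (extend2 n x.1) k j = true) := by
  intro x y h1 _
  dsimp only
  rw [bval_local (extend2 n x.1) (extend2 n y.1) k j hj]
  intro q hq1 hq2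
  unfold extend2
  split_ifs with h
  · exact h1 _ ⟨_, rfl, by simp only; omega, by simp only; omega⟩
  · rfl

lemma node_pr (n k j : ℕ) (hj : 1 ≤ j) (hv : (j + 1) * 2 ^ k ≤ 2 ^ (n + 1)) :
    pr (fun x : XX n => bval (extend2 n x.1) k j = true) = 1 / 2 := by
  let e : XX n ≃ XX n := ⟨fun x => (fun i => ! x.1 i, x.2), fun x => (fun i => ! x.1 i, x.2),
    fun x => by simp, fun x => by simp⟩
  have h1 := pr_equiv e (fun x : XX n => bval (extend2 n x.1) k j = true)
  have h2 := pr_not (fun x : XX n => bval (extend2 n x.1) k j = true)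
  have h3 : (fun x : XX n => bval (extend2 n (e x).1) k j = true) =
      fun x : XX n => ¬ (bval (extend2 n x.1) k j = true) := by
    ext x
    rw [bval_local (extend2 n (e x).1) (fun q => ! extend2 n x.1 q) k j hj, bval_not]
    · simp
    · intro q hq1 hq2
      have hh : 1 ≤ q ∧ q ≤ 2 ^ (n + 1) - 1 := by omega
      simp [extend2, hh, e]
  rw [h3] at h1
  linarith

def AN (n p k : ℕ) : Set (Fin (2 ^ (n + 1) - 1) ⊕ Fin n) :=
  {s | ∃ i : Fin (2 ^ (n + 1) - 1), s = Sum.inl i ∧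
    ((i.1 + 1 + 2 ^ k ≤ p ∧ p < i.1 + 1 + 2 ^ (k + 8)) ∨ (p + 2 ^ k ≤ i.1 + 1 ∧ i.1 + 1 < p + 2 ^ (k + 8)))}
def AC (n k : ℕ) : Set (Fin (2 ^ (n + 1) - 1) ⊕ Fin n) :=
  {s | ∃ i : Fin n, s = Sum.inr i ∧ k ≤ i.1 ∧ i.1 < k + 8}

lemma NS_sub {n p k j : ℕ} (hj : j ∈ TT n p k) : NS n k j ⊆ AN n p k := by
  rintro s ⟨i, rfl, h1, h2⟩
  refine ⟨i, rfl, ?_⟩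
  unfold TT at hj
  rw [Finset.mem_filter, Finset.mem_Icc] at hj
  obtain ⟨⟨-, b2⟩, b3, -, -, b4, b5⟩ := hj
  have hp1 : p / 2 ^ k * 2 ^ k ≤ p := Nat.div_mul_le_self _ _
  have hp2 : p < (p / 2 ^ k + 1) * 2 ^ k := by
    have := Nat.lt_div_mul_add (a := p) (b := 2 ^ k) (by positivity)
    rw [Nat.add_mul, one_mul]; exact this
  have h8 : 2 ^ (k + 8) = 256 * 2 ^ k := by rw [pow_add]; ring
  rw [h8]
  obtain ⟨j, rfl⟩ : ∃ j', j = j' + 1 := ⟨j - 1, by omega⟩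
  rw [Nat.add_sub_cancel] at h1
  generalize p / 2 ^ k = a at *
  generalize i.1 + 1 = q at *
  have hP : 0 < 2 ^ k := by positivity
  generalize 2 ^ k = P at *
  rcases (by omega : j + 1 + 2 ≤ a ∨ a + 3 ≤ j + 1) with h | h
  · left
    have e1 : (j + 3) * P ≤ a * P := Nat.mul_le_mul_right _ (by omega)
    have e2 : (a + 1) * P ≤ (j + 256) * P := Nat.mul_le_mul_right _ (by omega)
    constructor <;> nlinarith
  · right
    have e1 : (a + 2) * P ≤ j * P := Nat.mul_le_mul_right _ (by omega)
    have e2 : (j + 2) * P ≤ (a + 256) * P := Nat.mul_le_mul_right _ (by omega)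
    constructor <;> nlinarith

lemma EV_dep (n p k : ℕ) : Dep (AN n p k) (EV n p k) := by
  refine Dep.all fun j hj => ?_
  have h1 : 1 ≤ j := by
    unfold TT at hj; rw [Finset.mem_filter] at hj; exact hj.2.1
  exact (node_dep n k j h1).mono (NS_sub hj)

lemma NS_disj {n k i j : ℕ} (h : i + 2 ≤ j) : Disjoint (NS n k i) (NS n k j) := by
  rw [Set.disjoint_left]
  rintro s ⟨a, rfl, h1, h2⟩ ⟨b, hb, h3, h4⟩
  obtain rfl := Sum.inl.inj hb
  have : (i + 1) * 2 ^ k ≤ (j - 1) * 2 ^ k := Nat.mul_le_mul_right _ (by omega)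
  omega

lemma EV_pr (n p k : ℕ) : (1 / 2 : ℝ) ^ 510 ≤ pr (EV n p k) := by
  have hm : ∀ j ∈ TT n p k, 1 ≤ j ∧ (j + 1) * 2 ^ k ≤ 2 ^ (n + 1) ∧ j % 2 = 1 := by
    intro j hj
    unfold TT at hj; rw [Finset.mem_filter] at hj; exact ⟨hj.2.1, hj.2.2.1, hj.2.2.2.1⟩
  have := pr_all (TT n p k) (fun j => NS n k j) (fun j (x : XX n) => bval (extend2 n x.1) k j = true)
    (fun j hj => node_dep n k j (hm j hj).1) (by
      intro s hs t ht hst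
      have := (hm s hs).2.2
      have := (hm t ht).2.2
      rcases (by omega : s + 2 ≤ t ∨ t + 2 ≤ s) with h | h
      · exact NS_disj h
      · exact (NS_disj h).symm)
  unfold EV
  rw [this, Finset.prod_congr rfl (fun j hj => node_pr n k j (hm j hj).1 (hm j hj).2.1),
    Finset.prod_const]
  exact pow_le_pow_of_le_one (by norm_num) (by norm_num) (TT_card n p k)

def dl : ℝ := (1 / 2 : ℝ) ^ 510 * (1 / 27)

lemma EB_dep (n p k : ℕ) : Dep (AN n p k ∪ AC n k) (EB n p k) := by
  have hc : ∀ l v, k ≤ l → l < k + 8 → Dep (AN n p k ∪ AC n k) (EC n l v) := by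
    intro l v h1 h2
    refine (EC_dep n l v).mono ?_
    rintro s ⟨i, rfl, rfl⟩
    exact Or.inr ⟨i, rfl, h1, h2⟩
  exact Dep.and ((EV_dep n p k).mono Set.subset_union_left)
    (Dep.and (hc _ _ (by omega) (by omega)) (Dep.and (hc _ _ (by omega) (by omega))
      (hc _ _ (by omega) (by omega))))

lemma CC_disj (n : ℕ) {l l' : ℕ} (h : l ≠ l') :
    Disjoint {s : Fin (2 ^ (n + 1) - 1) ⊕ Fin n | ∃ i : Fin n, s = Sum.inr i ∧ i.1 = l}
      {s | ∃ i : Fin n, s = Sum.inr i ∧ i.1 = l'} := by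
  rw [Set.disjoint_left]
  rintro s ⟨a, rfl, h1⟩ ⟨b, hb, h3⟩
  obtain rfl := Sum.inr.inj hb
  omega

lemma EB_pr (n p k : ℕ) (hk : k + 7 ≤ n) : dl ≤ pr (EB n p k) := by
  have hc : ∀ l v, k ≤ l → l < k + 8 → Dep (AC n k) (EC n l v) := by
    intro l v h1 h2
    refine (EC_dep n l v).mono ?_
    rintro s ⟨i, rfl, rfl⟩
    exact ⟨i, rfl, h1, h2⟩
  have h2 : ∀ v w, pr (fun x : XX n => EC n (k + 5) v x ∧ EC n (k + 6) w x) = 1 / 9 := by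
    intro v w
    rw [pr_and (CC_disj n (by omega)) (EC_dep n _ _) (EC_dep n _ _), EC_pr n _ (by omega),
      EC_pr n _ (by omega)]
    norm_num
  have h3 : ∀ u v w, pr (fun x : XX n => EC n (k + 4) u x ∧ EC n (k + 5) v x ∧ EC n (k + 6) w x) = 1 / 27 := by
    intro u v w
    rw [pr_and (A := {s | ∃ i : Fin n, s = Sum.inr i ∧ i.1 = k + 4})
      (B := {s | ∃ i : Fin n, s = Sum.inr i ∧ (i.1 = k + 5 ∨ i.1 = k + 6)}) _ (EC_dep n _ _)
      (R := fun x => EC n (k + 5) v x ∧ EC n (k + 6) w x), h2, EC_pr n _ (by omega)]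
    · norm_num
    · refine Dep.and ((EC_dep n _ _).mono ?_) ((EC_dep n _ _).mono ?_)
      · rintro s ⟨i, rfl, h⟩; exact ⟨i, rfl, Or.inl h⟩
      · rintro s ⟨i, rfl, h⟩; exact ⟨i, rfl, Or.inr h⟩
    · rw [Set.disjoint_left]
      rintro s ⟨a, rfl, h1⟩ ⟨b, hb, h3⟩
      obtain rfl := Sum.inr.inj hb
      omega
  unfold EB
  rw [pr_and (A := AN n p k) (B := AC n k) _ (EV_dep n p k)
      (R := fun x => EC n (k + 4) _ x ∧ EC n (k + 5) _ x ∧ EC n (k + 6) _ x), h3]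
  · exact mul_le_mul_of_nonneg_right (EV_pr n p k) (by norm_num)
  · exact Dep.and (hc _ _ (by omega) (by omega)) (Dep.and (hc _ _ (by omega) (by omega))
      (hc _ _ (by omega) (by omega)))
  · rw [Set.disjoint_left]
    rintro s ⟨a, rfl, h1⟩ ⟨b, hb, h3⟩
    cases hb

lemma block_disj (n p : ℕ) {b b' : ℕ} (h : b < b') :
    Disjoint (AN n p (8 * b) ∪ AC n (8 * b)) (AN n p (8 * b') ∪ AC n (8 * b')) := by
  have hpow : 2 ^ (8 * b + 8) ≤ 2 ^ (8 * b') := Nat.pow_le_pow_right (by norm_num) (by omega)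
  rw [Set.disjoint_left]
  rintro s (⟨a, rfl, h1⟩ | ⟨a, rfl, h1⟩) (⟨c, hc, h3⟩ | ⟨c, hc, h3⟩)
  · obtain rfl := Sum.inl.inj hc
    have : 0 < 2 ^ (8 * b) := by positivity
    have : 0 < 2 ^ (8 * b') := by positivity
    omega
  · cases hc
  · cases hc
  · obtain rfl := Sum.inr.inj hc
    omega

lemma Q_pr (n p : ℕ) :
    pr (fun x : XX n => Qn (extend2 n x.1) (cc n x.2) n 0 p) ≤ (1 - dl) ^ (n / 8) := by
  have h1 : pr (fun x : XX n => Qn (extend2 n x.1) (cc n x.2) n 0 p) ≤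
      pr (fun x : XX n => ∀ b ∈ Finset.range (n / 8), ¬ EB n p (8 * b) x) := by
    refine pr_mono fun x hx b hb hE => ?_
    rw [Finset.mem_range] at hb
    exact EB_kill (by omega) hE hx
  refine h1.trans ?_
  rw [pr_all (Finset.range (n / 8)) (fun b => AN n p (8 * b) ∪ AC n (8 * b))
    (fun b x => ¬ EB n p (8 * b) x) (fun b _ => (EB_dep n p _).not) (by
      intro s _ t _ hst
      rcases lt_or_gt_of_ne hst with h | h
      · exact block_disj n p h
      · exact (block_disj n p h).symm)]
  calc _ ≤ ∏ b ∈ Finset.range (n / 8), (1 - dl) := by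
        refine Finset.prod_le_prod (fun _ _ => pr_nonneg _) fun b hb => ?_
        rw [Finset.mem_range] at hb
        rw [pr_not]
        have := EB_pr n p (8 * b) (by omega)
        linarith
    _ = _ := by simp

open Classical in
def JJ (n : ℕ) (c : Fin n → Fin 3) (ω : Fin (2 ^ (n + 1) - 1) → Bool) :
    Finset (Fin (2 ^ (n + 1) - 1)) :=
  Finset.univ.filter (fun i => Qn (extend2 n ω) (cc n c) n 0 (i.1 + 1))

lemma JJ_stop (n : ℕ) (c : Fin n → Fin 3) (ω ω' : Fin (2 ^ (n + 1) - 1) → Bool)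
    (h : ∀ i ∈ JJ n c ω, ω i = ω' i) :
    JJ n c ω' = JJ n c ω ∧ chi (iterMaj2 n ω') = chi (iterMaj2 n ω) := by
  classical
  have h0 : ∀ j, Qn (extend2 n ω) (cc n c) n 0 j → extend2 n ω' j = extend2 n ω j := by
    intro j hj
    obtain ⟨-, h1, h2⟩ := Qn_range hj
    have hh : 1 ≤ j ∧ j ≤ 2 ^ (n + 1) - 1 := by simp at h2; omega
    simp only [extend2, hh, and_self, dite_true]
    refine (h _ ?_).symm
    unfold JJ
    rw [Finset.mem_filter]
    refine ⟨Finset.mem_univ _, ?_⟩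
    convert hj using 1
    simp only; omega
  constructor
  · unfold JJ
    ext i
    simp only [Finset.mem_filter, Finset.mem_univ, true_and]
    exact ⟨Qn_mono h0, Qn_mono' h0⟩
  · unfold iterMaj2
    rw [Qn_val h0 n 1 Qn.top]

lemma dl_le : dl ≤ 1 := by
  unfold dl
  exact mul_le_one₀ (pow_le_one₀ (by norm_num) (by norm_num)) (by norm_num) (by norm_num)

lemma chi_sq (b : Bool) : chi b ^ 2 = 1 := by cases b <;> simp [chi]

lemma level_bound (n k : ℕ) (hk : 1 ≤ k) :
    (∑ S ∈ Finset.univ.powersetCard k, fc (fun ω => chi (iterMaj2 n ω)) S ^ 2) ≤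
      k * (1 - dl) ^ (n / 8) := by
  classical
  set f : (Fin (2 ^ (n + 1) - 1) → Bool) → ℝ := fun ω => chi (iterMaj2 n ω) with hf
  set W := ∑ S ∈ Finset.univ.powersetCard k, fc f S ^ 2 with hW
  set d : ℝ := (1 - dl) ^ (n / 8) with hd
  have hW0 : 0 ≤ W := Finset.sum_nonneg fun _ _ => sq_nonneg _
  have hss : ∀ c : Fin n → Fin 3, W ^ 2 ≤ ∑ S ∈ Finset.univ.powersetCard k, fc f S ^ 2 *
      ((∑ ω, if Disjoint S (JJ n c ω) then (0 : ℝ) else 1) / 2 ^ (2 ^ (n + 1) - 1)) := fun c =>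
    schramm_steif k hk f (fun ω => chi_sq _) (JJ n c) (JJ_stop n c)
  have hcard : (Fintype.card (XX n) : ℝ) = 2 ^ (2 ^ (n + 1) - 1) * 3 ^ n := by
    simp [XX, Fintype.card_prod]
  have hS : ∀ S ∈ Finset.univ.powersetCard k, ∑ c : Fin n → Fin 3,
      ((∑ ω, if Disjoint S (JJ n c ω) then (0 : ℝ) else 1) / 2 ^ (2 ^ (n + 1) - 1)) ≤ 3 ^ n * (k * d) := by
    intro S hS
    have hSk : S.card = k := (Finset.mem_powersetCard.1 hS).2
    rw [← Finset.sum_div, div_le_iff₀ (by positivity)]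
    have e1 : ∀ c ω, (if Disjoint S (JJ n c ω) then (0 : ℝ) else 1) ≤
        ∑ i ∈ S, if Qn (extend2 n ω) (cc n c) n 0 (i.1 + 1) then (1 : ℝ) else 0 := by
      intro c ω
      split_ifs with h
      · exact Finset.sum_nonneg fun i _ => by split_ifs <;> norm_num
      · rw [Finset.not_disjoint_iff] at h
        obtain ⟨i, hi, hJ⟩ := h
        unfold JJ at hJ
        rw [Finset.mem_filter] at hJ
        calc (1 : ℝ) = if Qn (extend2 n ω) (cc n c) n 0 (i.1 + 1) then (1 : ℝ) else 0 := by
              rw [if_pos hJ.2]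
          _ ≤ _ := Finset.single_le_sum (f := fun i : Fin (2 ^ (n + 1) - 1) =>
              if Qn (extend2 n ω) (cc n c) n 0 (i.1 + 1) then (1 : ℝ) else 0)
              (fun i _ => by split_ifs <;> norm_num) hi
    have e2 : ∀ i : Fin (2 ^ (n + 1) - 1), ∑ c : Fin n → Fin 3, ∑ ω : Fin (2 ^ (n + 1) - 1) → Bool,
        (if Qn (extend2 n ω) (cc n c) n 0 (i.1 + 1) then (1 : ℝ) else 0) ≤
          d * (2 ^ (2 ^ (n + 1) - 1) * 3 ^ n) := by
      intro i
      have := Q_pr n (i.1 + 1)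
      unfold pr at this
      rw [div_le_iff₀ cardX_pos, hcard] at this
      refine le_trans (le_of_eq ?_) this
      rw [Finset.sum_comm, Fintype.sum_prod_type]
    calc _ ≤ ∑ c : Fin n → Fin 3, ∑ ω : Fin (2 ^ (n + 1) - 1) → Bool,
          ∑ i ∈ S, (if Qn (extend2 n ω) (cc n c) n 0 (i.1 + 1) then (1 : ℝ) else 0) :=
          Finset.sum_le_sum fun c _ => Finset.sum_le_sum fun ω _ => e1 c ω
      _ = ∑ i ∈ S, ∑ c : Fin n → Fin 3, ∑ ω : Fin (2 ^ (n + 1) - 1) → Bool,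
          (if Qn (extend2 n ω) (cc n c) n 0 (i.1 + 1) then (1 : ℝ) else 0) := by
          symm
          rw [Finset.sum_comm]
          refine Finset.sum_congr rfl fun c _ => ?_
          rw [Finset.sum_comm]
      _ ≤ ∑ i ∈ S, d * (2 ^ (2 ^ (n + 1) - 1) * 3 ^ n) := Finset.sum_le_sum fun i _ => e2 i
      _ = _ := by rw [Finset.sum_const, hSk, nsmul_eq_mul]; ring
  have htot : 3 ^ n * W ^ 2 ≤ W * (3 ^ n * (k * d)) := by
    calc (3 : ℝ) ^ n * W ^ 2 = ∑ c : Fin n → Fin 3, W ^ 2 := by simp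
      _ ≤ _ := Finset.sum_le_sum fun c _ => hss c
      _ = ∑ S ∈ Finset.univ.powersetCard k, fc f S ^ 2 * ∑ c : Fin n → Fin 3,
          ((∑ ω, if Disjoint S (JJ n c ω) then (0 : ℝ) else 1) / 2 ^ (2 ^ (n + 1) - 1)) := by
          rw [Finset.sum_comm]
          refine Finset.sum_congr rfl fun S _ => ?_
          rw [Finset.mul_sum]
      _ ≤ ∑ S ∈ Finset.univ.powersetCard k, fc f S ^ 2 * (3 ^ n * (k * d)) :=
          Finset.sum_le_sum fun S hS' => mul_le_mul_of_nonneg_left (hS S hS') (sq_nonneg _)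
      _ = _ := by rw [← Finset.sum_mul]
  by_contra hlt
  rw [not_le] at hlt
  have h3 : (0 : ℝ) < 3 ^ n := by positivity
  have hkd : 0 ≤ (k : ℝ) * d := by
    have := dl_le
    have : 0 ≤ d := pow_nonneg (by linarith) _
    positivity
  have hWp : 0 < W := lt_of_le_of_lt hkd hlt
  have : W * (3 ^ n * (k * d)) < 3 ^ n * W ^ 2 := by
    have := mul_lt_mul_of_pos_left hlt (mul_pos hWp h3)
    nlinarith
  linarith

lemma cov_bounds (n K : ℕ) (ε : ℝ) (hε0 : 0 < ε) (hε : ε ≤ 1 / 2) :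
    0 ≤ noiseCov (2 ^ (n + 1) - 1) ε (fun ω => chi (iterMaj2 n ω)) ∧
    noiseCov (2 ^ (n + 1) - 1) ε (fun ω => chi (iterMaj2 n ω)) ≤
      (∑ k ∈ Finset.Icc 1 K, (k : ℝ)) * (1 - dl) ^ (n / 8) + (1 - 2 * ε) ^ K := by
  rw [noiseCov_eq]
  set f : (Fin (2 ^ (n + 1) - 1) → Bool) → ℝ := fun ω => chi (iterMaj2 n ω) with hf
  have hr0 : 0 ≤ 1 - 2 * ε := by linarith
  have hr1 : 1 - 2 * ε ≤ 1 := by linarith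
  refine ⟨Finset.sum_nonneg fun S _ => mul_nonneg (pow_nonneg hr0 _) (sq_nonneg _), ?_⟩
  have hpt : ∀ S ∈ Finset.univ.erase (∅ : Finset (Fin (2 ^ (n + 1) - 1))),
      (1 - 2 * ε) ^ S.card * fc f S ^ 2 ≤
      (∑ k ∈ Finset.Icc 1 K, if S.card = k then fc f S ^ 2 else 0) + (1 - 2 * ε) ^ K * fc f S ^ 2 := by
    intro S hS
    have hS1 : 1 ≤ S.card := Finset.card_pos.2 (Finset.nonempty_iff_ne_empty.2 (Finset.ne_of_mem_erase hS))
    have hsq := sq_nonneg (fc f S)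
    rw [Finset.sum_ite_eq]
    split_ifs with h
    · have h1 : (1 - 2 * ε) ^ S.card * fc f S ^ 2 ≤ 1 * fc f S ^ 2 :=
        mul_le_mul_of_nonneg_right (pow_le_one₀ hr0 hr1) hsq
      have h2 : 0 ≤ (1 - 2 * ε) ^ K * fc f S ^ 2 := mul_nonneg (pow_nonneg hr0 _) hsq
      linarith
    · rw [Finset.mem_Icc] at h
      rw [zero_add]
      exact mul_le_mul_of_nonneg_right (pow_le_pow_of_le_one hr0 hr1 (by omega)) hsq
  have hpos : ∀ S : Finset (Fin (2 ^ (n + 1) - 1)), 0 ≤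
      (∑ k ∈ Finset.Icc 1 K, if S.card = k then fc f S ^ 2 else 0) + (1 - 2 * ε) ^ K * fc f S ^ 2 := by
    intro S
    refine add_nonneg (Finset.sum_nonneg fun k _ => ?_) (mul_nonneg (pow_nonneg hr0 _) (sq_nonneg _))
    split_ifs
    · exact sq_nonneg _
    · exact le_rfl
  refine (Finset.sum_le_sum hpt).trans ((Finset.sum_le_sum_of_subset_of_nonneg
    (Finset.erase_subset _ _) (fun S _ _ => hpos S)).trans ?_)
  rw [Finset.sum_add_distrib, ← Finset.mul_sum, parseval f (fun ω => chi_sq _), mul_one,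
    Finset.sum_comm, Finset.sum_mul]
  refine add_le_add_left (Finset.sum_le_sum fun k hk => ?_) _
  rw [Finset.mem_Icc] at hk
  refine le_trans (le_of_eq ?_) (level_bound n k hk.1)
  rw [← Finset.sum_filter, Finset.powersetCard_eq_filter, Finset.powerset_univ]

lemma dl_tendsto : Tendsto (fun n : ℕ => (1 - dl) ^ (n / 8)) atTop (nhds 0) := by
  have h1 : 0 < dl := by unfold dl; positivity
  have h2 := dl_le
  exact (tendsto_pow_atTop_nhds_zero_of_lt_one (by linarith) (by linarith)).comp
    (Nat.tendsto_div_const_atTop (by norm_num))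

/-- the sequence of convolutional iterated 3-majority functions with stride 2 is
noise sensitive: for every `0 < ε ≤ 1/2`, `Cov(f_n(ω), f_n(ω^ε)) → 0`. -/
theorem iterated_three_majority_stride_two_noise_sensitive
    (ε : ℝ) (hε0 : 0 < ε) (hε : ε ≤ 1 / 2) :
    Tendsto (fun n => noiseCov (2 ^ (n + 1) - 1) ε (fun ω => chi (iterMaj2 n ω)))
      atTop (nhds 0) := by
  rw [Metric.tendsto_atTop]
  intro e he
  obtain ⟨K, hK⟩ := exists_pow_lt_of_lt_one (half_pos he) (show 1 - 2 * ε < 1 by linarith)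
  have hT : Tendsto (fun n : ℕ => (∑ k ∈ Finset.Icc 1 K, (k : ℝ)) * (1 - dl) ^ (n / 8)) atTop (nhds 0) := by
    simpa using dl_tendsto.const_mul (∑ k ∈ Finset.Icc 1 K, (k : ℝ))
  obtain ⟨N, hN⟩ := eventually_atTop.1 (hT.eventually_lt_const (half_pos he))
  refine ⟨N, fun n hn => ?_⟩
  obtain ⟨b1, b2⟩ := cov_bounds n K ε hε0 hε
  have := hN n hn
  rw [Real.dist_eq, sub_zero, abs_of_nonneg b1]
  linarith

end
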